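/- arXiv:2408.14046 — 2 statements merged into one kernel-verified Lean document; each statement's English description precedes it below -/
import Mathlib

section
/- Let q be a prime power, let d be a positive integer coprime to q, let n_0 ≤ n be positive integers, let g ∈ GL(n_0, F_q), and let χ be an irreducible complex character of GL(n, F_q). If for each prime divisor ℓ of d one has v_ℓ(χ(1)) − v_ℓ(∏_{i=0}^{n_0−1} (q^{n−i} − 1)) ≥ v_ℓ(d), then d divides χ(g). -/
open Matrix

noncomputable def blockOneHom (F : Type*) [Field F] (n₀ n : ℕ) (h : n₀ ≤ n) :
    Matrix (Fin n₀) (Fin n₀) F →* Matrix (Fin n) (Fin n) F :=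
  (Matrix.reindexAlgEquiv F F
      ((finSumFinEquiv (m := n₀) (n := n - n₀)).trans
        (finCongr (Nat.add_sub_cancel' h)))).toAlgHom.toMonoidHom.comp
    { toFun := fun A => Matrix.fromBlocks A 0 0 (1 : Matrix (Fin (n - n₀)) (Fin (n - n₀)) F)
      map_one' := by simp [Matrix.fromBlocks_one]
      map_mul' := fun A B => by
        simp [Matrix.fromBlocks_multiply] }

noncomputable def glEmbed {F : Type*} [Field F] {n₀ n : ℕ} (h : n₀ ≤ n) :
    GL (Fin n₀) F →* GL (Fin n) F :=
  Units.map (blockOneHom F n₀ n h)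

def IsIrrChar (G : Type) [Group G] (f : G → ℂ) : Prop :=
  ∃ V : FDRep ℂ G, CategoryTheory.Simple V ∧ FDRep.character V = f

/-- `d` divides the algebraic number `z`, i.e. `z / d` is an algebraic integer. -/
def NatDvdAlg (d : ℕ) (z : ℂ) : Prop := IsIntegral ℤ (z / (d : ℂ))

/-!
For an irreducible character `χ` and an element `γ` with conjugacy class `C`, the class sum of `C`
is a central element of the group ring, integral over `ℤ`; by Schur's lemma it acts by a scalar `ω`,
and comparing traces gives `|C| χ(γ) = ω χ(1)` with `ω` an algebraic integer. Writing
`e = gcd(|C| d, χ(1))`, both `d` and `|C| d / e` therefore multiply `χ(γ) / d` to an algebraic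
integer, and these two multipliers are coprime as soon as `v_ℓ(|C|) + v_ℓ(d) ≤ v_ℓ(χ(1))` for every
prime `ℓ` dividing `d`.

For `γ = diag(g, 1)` the matrices `diag(1, B)` centralize `γ`, so `|C|` divides
`|GL(n, q)| / |GL(n - n₀, q)|`, which up to a power of `q` is the product of the `q ^ (n - i) - 1`
over `i < n₀`.
-/

section Integrality

variable {R A : Type*} [CommRing R] [CommRing A] [Algebra R A]

lemma isIntegral_of_isCoprime_smul {a b : R} (hab : IsCoprime a b) {x : A}
    (ha : IsIntegral R (a • x)) (hb : IsIntegral R (b • x)) : IsIntegral R x := by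
  obtain ⟨u, v, huv⟩ := hab
  have hx : x = u • a • x + v • b • x := by
    rw [smul_smul, smul_smul, ← add_smul, huv, one_smul]
  rw [hx]
  exact (ha.smul u).add (hb.smul v)

variable {K V : Type*} [Field K] [Algebra R K] [AddCommGroup V] [Module K V] [Module R V]
  [IsScalarTower R K V]

lemma isIntegral_of_hasEigenvalue {f : Module.End K V} (hf : IsIntegral R f) {μ : K}
    (hμ : f.HasEigenvalue μ) : IsIntegral R μ := by
  obtain ⟨p, hp, hpf⟩ := hf
  obtain ⟨v, hv⟩ := hμ.exists_hasEigenvector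
  have hpμ : Polynomial.aeval μ p • v = 0 := by
    have := Module.End.aeval_apply_of_hasEigenvector (p := p.map (algebraMap R K)) hv
    rw [Polynomial.aeval_map_algebraMap, Polynomial.eval_map_algebraMap] at this
    rw [← this, Polynomial.aeval_def, hpf, LinearMap.zero_apply]
  exact ⟨p, hp, (smul_eq_zero.1 hpμ).resolve_right hv.2⟩

lemma isIntegral_trace_of_isIntegral [IsAlgClosed K] [FiniteDimensional K V]
    {f : Module.End K V} (hf : IsIntegral R f) : IsIntegral R (LinearMap.trace K V f) := by
  rw [Module.End.trace_eq_sum_roots_charpoly_of_splits (IsAlgClosed.splits _)]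
  refine IsIntegral.multiset_sum fun μ hμ ↦ isIntegral_of_hasEigenvalue hf ?_
  exact (Module.End.hasEigenvalue_iff_isRoot_charpoly _ _).2 (Polynomial.isRoot_of_mem_roots hμ)

end Integrality

section Valuation

lemma padicValNat_le_of_dvd_mul {p a b c : ℕ} (hp : p.Prime) (hpa : ¬ p ∣ a) (hb : b ≠ 0)
    (hc : c ∣ a * b) : padicValNat p c ≤ padicValNat p b := by
  have : Fact p.Prime := ⟨hp⟩
  refine (padicValNat_dvd_iff_le hb).1 ?_
  exact ((hp.coprime_iff_not_dvd.2 hpa).pow_left _).dvd_of_dvd_mul_left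
    (pow_padicValNat_dvd.trans hc)

lemma coprime_div_gcd_of_padicValNat_le {a b d : ℕ} (ha : a ≠ 0)
    (hab : ∀ p : ℕ, p.Prime → p ∣ d → padicValNat p a ≤ padicValNat p b) :
    (a / a.gcd b).Coprime d := by
  refine Nat.coprime_of_dvd fun p hp hpa hpd ↦ ?_
  have : Fact p.Prime := ⟨hp⟩
  have hgcd : p ^ padicValNat p a ∣ a.gcd b :=
    Nat.dvd_gcd pow_padicValNat_dvd ((pow_dvd_pow p (hab p hp hpd)).trans pow_padicValNat_dvd)
  refine pow_succ_padicValNat_not_dvd (p := p) ha ?_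
  rw [pow_succ']
  exact (mul_dvd_mul hpa hgcd).trans (Nat.div_mul_cancel (a.gcd_dvd_left b)).dvd

lemma prod_pow_sub_one_ne_zero {q m n : ℕ} (hq : 1 < q) (hmn : m ≤ n) :
    ∏ i ∈ Finset.range m, (q ^ (n - i) - 1) ≠ 0 := by
  refine Finset.prod_ne_zero_iff.2 fun i hi ↦ Nat.sub_ne_zero_of_lt ?_
  exact Nat.one_lt_pow (Nat.sub_ne_zero_of_lt ((Finset.mem_range.1 hi).trans_le hmn)) hq

lemma isIntegral_div_natCast_of_padicValNat_le {K : Type*} [Field K] [CharZero K] {z ω : K}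
    {a d m : ℕ} (hz : IsIntegral ℤ z) (hω : IsIntegral ℤ ω) (ha : a ≠ 0) (hd : d ≠ 0)
    (hazm : a * z = ω * m)
    (hval : ∀ p : ℕ, p.Prime → p ∣ d → padicValNat p a + padicValNat p d ≤ padicValNat p m) :
    IsIntegral ℤ (z / d) := by
  have had : a * d ≠ 0 := mul_ne_zero ha hd
  have hd' : (d : K) ≠ 0 := Nat.cast_ne_zero.2 hd
  have hgcd : ((a * d).gcd m : K) ≠ 0 := Nat.cast_ne_zero.2 (Nat.gcd_ne_zero_left had)
  have hcop : IsCoprime ((a * d / (a * d).gcd m : ℕ) : ℤ) (d : ℤ) :=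
    Nat.isCoprime_iff_coprime.2 <| coprime_div_gcd_of_padicValNat_le had fun p hp hpd ↦ by
      have : Fact p.Prime := ⟨hp⟩
      exact (padicValNat.mul ha hd).trans_le (hval p hp hpd)
  have hmul : ((a * d / (a * d).gcd m : ℕ) : ℤ) • (z / d) = (m / (a * d).gcd m : ℕ) • ω := by
    rw [natCast_zsmul, nsmul_eq_mul, nsmul_eq_mul, Nat.cast_div (Nat.gcd_dvd_left _ _) hgcd,
      Nat.cast_div (Nat.gcd_dvd_right _ _) hgcd, Nat.cast_mul]
    field_simp
    linear_combination hazm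
  refine isIntegral_of_isCoprime_smul hcop ?_ ?_
  · rw [hmul]
    exact hω.nsmul _
  · rwa [natCast_zsmul, nsmul_eq_mul, mul_div_cancel₀ _ hd']

end Valuation

section ClassSum

variable (R : Type*) [Semiring R] {G : Type*} [Group G] [Fintype G]

open scoped Classical in
/-- The sum of the elements of the conjugacy class `C` in the group ring `R[G]`: a central element,
whose action on an irreducible representation gives the value of the central character at `C`. -/
noncomputable def classSum (C : ConjClasses G) : MonoidAlgebra R G :=
  ∑ x with ConjClasses.mk x = C, MonoidAlgebra.of R G x

lemma commute_classSum_of (C : ConjClasses G) (h : G) :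
    Commute (classSum R C) (MonoidAlgebra.of R G h) := by
  classical
  have hconj (x : G) : ConjClasses.mk (h⁻¹ * x * h) = ConjClasses.mk x :=
    ConjClasses.mk_eq_mk_iff_isConj.2 (isConj_iff.2 ⟨h, by group⟩)
  rw [commute_iff_eq, classSum, Finset.sum_mul, Finset.mul_sum]
  refine Finset.sum_equiv (MulAut.conj h⁻¹).toEquiv (fun x ↦ ?_) fun x _ ↦ ?_
  · simp [hconj]
  · simp [MonoidAlgebra.single_mul_single, mul_assoc]

end ClassSum

universe u v

section Schur

open CategoryTheory

variable {k : Type u} {G : Type v} [Field k] [Monoid G] (V : FDRep k G) [Simple V]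

lemma nontrivial_of_simple : Nontrivial V := by
  by_contra hV
  rw [not_nontrivial_iff_subsingleton] at hV
  refine id_nonzero V ?_
  ext x
  exact Subsingleton.elim _ _

lemma exists_eq_algebraMap_of_commute [IsAlgClosed k] {f : Module.End k V}
    (hf : ∀ g, Commute f (V.ρ g)) : ∃ c : k, f = algebraMap k (Module.End k V) c := by
  let φ : V ⟶ V := ⟨FGModuleCat.ofHom f, fun g ↦
    InducedCategory.hom_ext (ModuleCat.hom_ext (hf g).eq)⟩
  obtain ⟨c, hc⟩ := endomorphism_simple_eq_smul_id k φ
  exact ⟨c, congrArg (fun ψ : V ⟶ V ↦ ψ.hom.hom.hom) hc.symm⟩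

end Schur

section CentralCharacter

open CategoryTheory

variable {k : Type u} {G : Type v} [Field k] [Group G]

lemma trace_lift_classSum [Fintype G] (V : FDRep k G) (g : G) :
    LinearMap.trace k V (MonoidAlgebra.lift ℤ _ G V.ρ (classSum ℤ (ConjClasses.mk g))) =
      (ConjClasses.mk g).carrier.ncard * V.character g := by
  classical
  have hchar (x : G) (hx : ConjClasses.mk x = ConjClasses.mk g) :
      V.character x = V.character g := by
    obtain ⟨h, rfl⟩ := isConj_iff.1 (ConjClasses.mk_eq_mk_iff_isConj.1 hx.symm)
    exact V.char_conj g h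
  have hcard : Finset.card {x | ConjClasses.mk x = ConjClasses.mk g} =
      (ConjClasses.mk g).carrier.ncard := by
    rw [← Set.ncard_coe_finset, Finset.coe_filter_univ]
    exact congrArg Set.ncard (Set.ext fun x ↦ ConjClasses.mem_carrier_iff_mk_eq.symm)
  simp only [classSum, map_sum, MonoidAlgebra.lift_of]
  rw [← hcard, ← nsmul_eq_mul]
  exact Finset.sum_eq_card_nsmul fun x hx ↦ hchar x (Finset.mem_filter_univ x |>.1 hx)

variable [IsAlgClosed k]

lemma isIntegral_character [Finite G] (V : FDRep k G) (g : G) : IsIntegral ℤ (V.character g) := by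
  refine isIntegral_trace_of_isIntegral (IsIntegral.of_pow (orderOf_pos g) ?_)
  rw [← map_pow, pow_orderOf_eq_one, map_one]
  exact isIntegral_one

variable (V : FDRep k G) [Simple V]

lemma exists_isIntegral_lift_classSum_eq [Fintype G] (C : ConjClasses G) :
    ∃ ω : k, IsIntegral ℤ ω ∧ MonoidAlgebra.lift ℤ _ G V.ρ (classSum ℤ C) =
      algebraMap k (Module.End k V) ω := by
  have := nontrivial_of_simple V
  obtain ⟨ω, hω⟩ := exists_eq_algebraMap_of_commute V fun h ↦ by
    simpa only [MonoidAlgebra.lift_of] using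
      (commute_classSum_of ℤ C h).map (MonoidAlgebra.lift ℤ _ G V.ρ)
  refine ⟨ω, ?_, hω⟩
  rw [← isIntegral_algebraMap_iff (algebraMap k (Module.End k V)).injective, ← hω]
  exact (IsIntegral.of_finite ℤ (classSum ℤ C)).map _

lemma exists_isIntegral_ncard_carrier_mul_character_eq [Finite G] (g : G) :
    ∃ ω : k, IsIntegral ℤ ω ∧
      (ConjClasses.mk g).carrier.ncard * V.character g = ω * Module.finrank k V := by
  have := Fintype.ofFinite G
  obtain ⟨ω, hω, hsum⟩ := exists_isIntegral_lift_classSum_eq V (ConjClasses.mk g)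
  refine ⟨ω, hω, ?_⟩
  rw [← trace_lift_classSum, hsum, Algebra.algebraMap_eq_smul_one, map_smul, LinearMap.trace_one,
    smul_eq_mul]

theorem isIntegral_character_div_of_padicValNat_le [CharZero k] [Finite G] (g : G) {d : ℕ}
    (hd : d ≠ 0)
    (hval : ∀ p : ℕ, p.Prime → p ∣ d →
      padicValNat p (ConjClasses.mk g).carrier.ncard + padicValNat p d ≤
        padicValNat p (Module.finrank k V)) :
    IsIntegral ℤ (V.character g / d) := by
  obtain ⟨ω, hω, hmul⟩ := exists_isIntegral_ncard_carrier_mul_character_eq V g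
  have hclass : (ConjClasses.mk g).carrier.ncard ≠ 0 :=
    Set.ncard_ne_zero_of_mem ConjClasses.mem_carrier_mk
  exact isIntegral_div_natCast_of_padicValNat_le (isIntegral_character V g) hω hclass hd hmul hval

end CentralCharacter

section Centralizer

lemma ncard_carrier_mul_card_dvd {G H : Type*} [Group G] [Group H] {ψ : H →* G}
    (hψ : Function.Injective ψ) {g : G} (hg : ∀ x, Commute (ψ x) g) :
    (ConjClasses.mk g).carrier.ncard * Nat.card H ∣ Nat.card G := by
  have hrange : ψ.range ≤ Subgroup.centralizer {g} := by
    rintro _ ⟨x, rfl⟩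
    exact Subgroup.mem_centralizer_singleton_iff.2 (hg x).eq
  have hcard : Nat.card H ∣ Nat.card (Subgroup.centralizer {g}) := by
    rw [Nat.card_congr (MonoidHom.ofInjective hψ).toEquiv]
    exact Subgroup.card_dvd_of_le hrange
  rw [Subgroup.nat_card_centralizer_nat_card_stabilizer] at hcard
  rw [← ConjAct.orbit_eq_carrier_conjClasses, ← MulAction.index_stabilizer, mul_comm]
  exact (mul_dvd_mul_right hcard _).trans (Subgroup.card_mul_index _).dvd

end Centralizer

section GeneralLinear

variable {F : Type*} [Field F] {n₀ n : ℕ}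

/-- The block embedding `B ↦ diag(1, B)` of `(n - n₀) × (n - n₀)` matrices into `n × n` matrices,
complementary to `blockOneHom`; it supplies the centralizing copy of `GL (n - n₀)`. -/
noncomputable def oneBlockHom (F : Type*) [Field F] (n₀ n : ℕ) (h : n₀ ≤ n) :
    Matrix (Fin (n - n₀)) (Fin (n - n₀)) F →* Matrix (Fin n) (Fin n) F :=
  (Matrix.reindexAlgEquiv F F
      ((finSumFinEquiv (m := n₀) (n := n - n₀)).trans
        (finCongr (Nat.add_sub_cancel' h)))).toAlgHom.toMonoidHom.comp
    { toFun := fun B => Matrix.fromBlocks (1 : Matrix (Fin n₀) (Fin n₀) F) 0 0 B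
      map_one' := Matrix.fromBlocks_one
      map_mul' := fun A B => by simp [Matrix.fromBlocks_multiply] }

lemma oneBlockHom_injective (h : n₀ ≤ n) : Function.Injective (oneBlockHom F n₀ n h) :=
  fun _ _ hAB ↦ (Matrix.fromBlocks_inj.1 ((Matrix.reindexAlgEquiv F F _).injective hAB)).2.2.2

lemma commute_oneBlockHom_blockOneHom (h : n₀ ≤ n) (A : Matrix (Fin n₀) (Fin n₀) F)
    (B : Matrix (Fin (n - n₀)) (Fin (n - n₀)) F) :
    Commute (oneBlockHom F n₀ n h B) (blockOneHom F n₀ n h A) := by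
  have hblocks : Commute (Matrix.fromBlocks 1 0 0 B) (Matrix.fromBlocks A 0 0 1) := by
    simp [commute_iff_eq, Matrix.fromBlocks_multiply]
  exact hblocks.map (Matrix.reindexAlgEquiv F F _)

variable [Fintype F]

variable (F) in
lemma card_GL_eq_pow_mul_prod (n : ℕ) :
    Nat.card (GL (Fin n) F) = Fintype.card F ^ n.choose 2 *
      ∏ i ∈ Finset.range n, (Fintype.card F ^ (n - i) - 1) := by
  rw [Matrix.card_GL_field, Fin.prod_univ_eq_prod_range
    (fun i ↦ Fintype.card F ^ n - Fintype.card F ^ i), Nat.choose_two_right, ← Finset.sum_range_id,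
    ← Finset.prod_pow_eq_pow_sum, ← Finset.prod_mul_distrib]
  refine Finset.prod_congr rfl fun i hi ↦ ?_
  rw [Nat.mul_sub, mul_one, pow_mul_pow_sub _ (Finset.mem_range.1 hi).le]

variable (F) in
lemma card_GL_dvd (h : n₀ ≤ n) :
    Nat.card (GL (Fin n) F) ∣ Fintype.card F ^ n.choose 2 *
      (∏ i ∈ Finset.range n₀, (Fintype.card F ^ (n - i) - 1)) *
        Nat.card (GL (Fin (n - n₀)) F) := by
  have hsplit : ∏ i ∈ Finset.range n, (Fintype.card F ^ (n - i) - 1) =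
      (∏ i ∈ Finset.range n₀, (Fintype.card F ^ (n - i) - 1)) *
        ∏ i ∈ Finset.range (n - n₀), (Fintype.card F ^ (n - n₀ - i) - 1) := by
    conv_lhs => rw [← Finset.prod_range_mul_prod_Ico _ h, Finset.prod_Ico_eq_prod_range]
    simp only [Nat.sub_sub]
  rw [card_GL_eq_pow_mul_prod F n, card_GL_eq_pow_mul_prod F (n - n₀), hsplit, ← mul_assoc]
  exact mul_dvd_mul_left _ (dvd_mul_left _ _)

lemma ncard_carrier_glEmbed_dvd (h : n₀ ≤ n) (g : GL (Fin n₀) F) :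
    (ConjClasses.mk (glEmbed h g)).carrier.ncard ∣ Fintype.card F ^ n.choose 2 *
      ∏ i ∈ Finset.range n₀, (Fintype.card F ^ (n - i) - 1) := by
  have hcomm (x : GL (Fin (n - n₀)) F) :
      Commute (Units.map (oneBlockHom F n₀ n h) x) (glEmbed h g) :=
    Units.ext (commute_oneBlockHom_blockOneHom h g.1 x.1)
  have hdvd := ncard_carrier_mul_card_dvd (Units.map_injective (oneBlockHom_injective h)) hcomm
  exact Nat.dvd_of_mul_dvd_mul_right Nat.card_pos (hdvd.trans (card_GL_dvd F h))

lemma padicValNat_ncard_carrier_glEmbed_le {p : ℕ} (hp : p.Prime) (hpF : ¬ p ∣ Fintype.card F)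
    (h : n₀ ≤ n) (g : GL (Fin n₀) F) :
    padicValNat p (ConjClasses.mk (glEmbed h g)).carrier.ncard ≤
      padicValNat p (∏ i ∈ Finset.range n₀, (Fintype.card F ^ (n - i) - 1)) :=
  padicValNat_le_of_dvd_mul hp (fun hdvd ↦ hpF (hp.dvd_of_dvd_pow hdvd))
    (prod_pow_sub_one_ne_zero Fintype.one_lt_card h) (ncard_carrier_glEmbed_dvd h g)

end GeneralLinear

theorem valuative_criterion_for_divisibility
    (q : ℕ) (hq : IsPrimePow q)
    (F : Type) [Field F] [Fintype F] (hFq : Fintype.card F = q)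
    (d : ℕ) (hd : 0 < d) (hdq : Nat.Coprime d q)
    (n₀ n : ℕ) (hn₀ : 0 < n₀) (h : n₀ ≤ n) (g : GL (Fin n₀) F)
    (χ : GL (Fin n) F → ℂ) (hχ : IsIrrChar _ χ)
    (hval : ∀ ℓ : ℕ, ℓ.Prime → ℓ ∣ d → ∀ m : ℕ, χ 1 = (m : ℂ) →
      (padicValNat ℓ d : ℤ) ≤
        (padicValNat ℓ m : ℤ) -
          (padicValNat ℓ (∏ i ∈ Finset.range n₀, (q ^ (n - i) - 1)) : ℤ)) :
    NatDvdAlg d (χ (glEmbed h g)) := by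
  subst hFq
  obtain ⟨V, hV, rfl⟩ := hχ
  refine isIntegral_character_div_of_padicValNat_le V (glEmbed h g) hd.ne' fun ℓ hℓ hℓd ↦ ?_
  have hℓF : ¬ ℓ ∣ Fintype.card F := fun hℓq ↦ Nat.not_coprime_of_dvd_of_dvd hℓ.one_lt hℓd hℓq hdq
  have hclass := padicValNat_ncard_carrier_glEmbed_le hℓ hℓF h g
  have hdegree := hval ℓ hℓ hℓd _ V.char_one
  omega
end

section
/- Let q be an odd prime power, n a positive integer, and μ ∈ 𝔛_n. Then v_2(a_μ) ≥ v_2( n! / ∏_{f ∈ Φ} |μ(f)|! ), where a_μ = (∏_{i=1}^{n} (q^i − 1)) / (∏_{f ∈ Φ} ∏_{i=1}^{|μ(f)|} (q^{d(f)·i} − 1)). -/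
/-- The `i`-th part (0-indexed, parts in weakly decreasing order) of the partition whose
multiset of parts is `lam`; `0` if `i` is at least the number of parts. -/
def partNth (lam : Multiset ℕ) (i : ℕ) : ℕ :=
  ((lam.sort (· ≤ ·)).reverse.getD i 0)

/-- The `j`-th part (0-indexed) of the conjugate partition: the number of parts `> j`. -/
def conjNth (lam : Multiset ℕ) (j : ℕ) : ℕ :=
  (lam.filter (fun m => j < m)).card

/-- The cells `(i, j)` (0-indexed) of the Young diagram of `lam`. -/
def cellsOf (lam : Multiset ℕ) : Finset (ℕ × ℕ) :=
  (Finset.range (Multiset.card lam) ×ˢ Finset.range lam.sum).filter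
    (fun c => c.2 < partNth lam c.1)

/-- The hook length of the cell `c = (i, j)` of `lam`:
`(λᵢ − j) + (λ'ⱼ − i) − 1`. -/
def hookLen (lam : Multiset ℕ) (c : ℕ × ℕ) : ℕ :=
  (partNth lam c.1 - c.2) + (conjNth lam c.2 - c.1) - 1

/-- The product of all hook lengths of `lam`. -/
def hookProd (lam : Multiset ℕ) : ℕ :=
  ∏ c ∈ cellsOf lam, hookLen lam c

/-- `α(λ) = Σᵢ (i − 1)·λᵢ` (1-indexed), i.e. `Σᵢ i·λᵢ` for the 0-indexed parts. -/
def alphaStat (lam : Multiset ℕ) : ℕ :=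
  ∑ i ∈ Finset.range (Multiset.card lam), i * partNth lam i

/-- `𝔣_λ = n! / ∏_{h ∈ H(λ)} |h|`, the degree of the irreducible character of `S_n`
indexed by `λ`, as a rational number. -/
def fDeg (lam : Multiset ℕ) : ℚ :=
  (Nat.factorial lam.sum : ℚ) / (hookProd lam : ℚ)

/-- `d_λ(x) = x^{α(λ)} · ∏_{i=1}^{n} (x^i − 1) / ∏_{h ∈ H(λ)} (x^{|h|} − 1)`. -/
def dDeg (lam : Multiset ℕ) (x : ℕ) : ℚ :=
  (x : ℚ) ^ alphaStat lam * (∏ i ∈ Finset.Icc 1 lam.sum, ((x : ℚ) ^ i - 1)) /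
    ∏ c ∈ cellsOf lam, ((x : ℚ) ^ hookLen lam c - 1)
/-- `μ` is a member of `𝔛_n`: a finitely supported assignment of a partition (given by its
multiset of positive parts) to each monic irreducible polynomial `f ≠ x` over `F`, such that
`Σ_f |μ(f)|·deg f = n`. -/
def IsXn (F : Type*) [Field F] (n : ℕ) (μ : Polynomial F →₀ Multiset ℕ) : Prop :=
  (∀ f ∈ μ.support, f.Monic ∧ Irreducible f ∧ f ≠ Polynomial.X) ∧
  (∀ f : Polynomial F, ∀ m ∈ μ f, 0 < m) ∧
  (μ.sum fun f lam => lam.sum * f.natDegree) = n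

/-- `a_μ = ∏_{i=1}^{n} (q^i − 1) / ∏_{f ∈ Φ} ∏_{i=1}^{|μ(f)|} (q^{d(f)·i} − 1)`. -/
noncomputable def aMu (q : ℕ) {F : Type*} [Field F] (n : ℕ)
    (μ : Polynomial F →₀ Multiset ℕ) : ℚ :=
  (∏ i ∈ Finset.Icc 1 n, ((q : ℚ) ^ i - 1)) /
    ∏ f ∈ μ.support, ∏ i ∈ Finset.Icc 1 (μ f).sum, ((q : ℚ) ^ (f.natDegree * i) - 1)

/-- `ψ_m(x) = ∏_{i=1}^{m} (x^i − 1)`. -/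
def psiPoly (m : ℕ) (x : ℚ) : ℚ := ∏ i ∈ Finset.Icc 1 m, (x ^ i - 1)

/-- `H(λ, x) = x^{α(λ)} / ∏_{h ∈ H(λ)} (x^{|h|} − 1)`. -/
def hFactor (lam : Multiset ℕ) (x : ℚ) : ℚ :=
  x ^ alphaStat lam / ∏ c ∈ cellsOf lam, (x ^ hookLen lam c - 1)

/-- `d_μ = ψ_n(q) · ∏_{f ∈ Φ} H(μ(f), q^{d(f)})`, the degree of the irreducible character of
`GL(n, q)` indexed by `μ`, as a rational number. -/
noncomputable def dMu (q : ℕ) {F : Type*} [Field F] (n : ℕ)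
    (μ : Polynomial F →₀ Multiset ℕ) : ℚ :=
  psiPoly n (q : ℚ) * ∏ f ∈ μ.support, hFactor (μ f) ((q : ℚ) ^ f.natDegree)

/-!
For odd `q ≠ ±1`, lifting the exponent gives
`v₂(q ^ i - 1) = v₂(i) + v₂(q - 1) + [i even] * (v₂(q + 1) - 1)`, so `v₂(ψₙ(q)) = v₂(n!) + E(n)`
with `E(n) = n * v₂(q - 1) + ⌊n / 2⌋ * (v₂(q + 1) - 1)`. The function `E` is superadditive and
satisfies `n ≤ E(n)`; with `v₂(d) ≤ d - 1` this yields `v₂(ψₘ(q ^ d)) ≤ v₂(m!) + E(d * m)`.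
Superadditivity once more bounds `∑ E(d(f) * |μ(f)|)` by `E(n)`.
-/

theorem padicValInt_eq_emultiplicity {p : ℕ} [Fact p.Prime] {z : ℤ} (hz : z ≠ 0) :
    (padicValInt p z : ℕ∞) = emultiplicity (p : ℤ) z := by
  rw [padicValInt, padicValNat_eq_emultiplicity (Int.natAbs_ne_zero.mpr hz),
    Int.emultiplicity_natAbs]

theorem one_le_padicValInt_of_dvd {p : ℕ} [Fact p.Prime] {z : ℤ} (hz : z ≠ 0)
    (hdvd : (p : ℤ) ∣ z) : 1 ≤ padicValInt p z :=
  one_le_padicValNat_of_dvd (Int.natAbs_ne_zero.mpr hz) (Int.natCast_dvd.mp hdvd)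

theorem padicValNat_factorial_succ (p : ℕ) [Fact p.Prime] (m : ℕ) :
    padicValNat p (m + 1).factorial = padicValNat p (m + 1) + padicValNat p m.factorial := by
  rw [Nat.factorial_succ, padicValNat.mul m.succ_ne_zero m.factorial_ne_zero]

theorem padicValRat_prod {ι : Type*} {p : ℕ} [Fact p.Prime] {s : Finset ι} {g : ι → ℚ}
    (hg : ∀ i ∈ s, g i ≠ 0) :
    padicValRat p (∏ i ∈ s, g i) = ∑ i ∈ s, padicValRat p (g i) := by
  induction s using Finset.cons_induction with
  | empty => simp
  | cons a s ha ih =>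
    rw [Finset.forall_mem_cons] at hg
    rw [Finset.prod_cons, Finset.sum_cons,
      padicValRat.mul hg.1 (Finset.prod_ne_zero_iff.mpr hg.2), ih hg.2]

section NotIsUnit

variable {R : Type*} [Ring R] {q : R}

theorem pow_sub_one_ne_zero_of_not_isUnit (hq : ¬IsUnit q) {i : ℕ} (hi : i ≠ 0) :
    q ^ i - 1 ≠ 0 :=
  sub_ne_zero.mpr fun h => hq (.of_pow_eq_one h hi)

theorem sub_one_ne_zero_of_not_isUnit (hq : ¬IsUnit q) : q - 1 ≠ 0 :=
  sub_ne_zero.mpr fun h => hq (h ▸ isUnit_one)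

theorem add_one_ne_zero_of_not_isUnit (hq : ¬IsUnit q) : q + 1 ≠ 0 :=
  fun h => hq (eq_neg_of_add_eq_zero_left h ▸ isUnit_one.neg)

end NotIsUnit

section PowSubOne

variable {q : ℤ} {i : ℕ}

theorem padicValInt_two_pow_sub_one_of_odd (hq : ¬IsUnit q) (hodd : Odd q) (hi : Odd i) :
    padicValInt 2 (q ^ i - 1) = padicValInt 2 (q - 1) := by
  have h_lte := emultiplicity_pow_sub_pow_of_prime Int.prime_two
    (hodd.sub_odd odd_one).two_dvd (Int.two_dvd_ne_zero.mpr (Int.odd_iff.mp hodd))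
    (by exact_mod_cast hi.not_two_dvd_nat)
  rw [one_pow, ← Nat.cast_ofNat, ← padicValInt_eq_emultiplicity (sub_one_ne_zero_of_not_isUnit hq),
    ← padicValInt_eq_emultiplicity (pow_sub_one_ne_zero_of_not_isUnit hq hi.pos.ne')] at h_lte
  exact_mod_cast h_lte

theorem padicValInt_two_pow_sub_one_of_even (hq : ¬IsUnit q) (hodd : Odd q) (hi : Even i)
    (hi₀ : i ≠ 0) :
    padicValInt 2 (q ^ i - 1) + 1 =
      padicValInt 2 (q + 1) + padicValInt 2 (q - 1) + padicValNat 2 i := by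
  have h_lte := Int.two_pow_sub_pow (hodd.sub_odd odd_one).two_dvd
    (Int.two_dvd_ne_zero.mpr (Int.odd_iff.mp hodd)) hi
  rw [one_pow, ← Nat.cast_ofNat, ← padicValInt_eq_emultiplicity (sub_one_ne_zero_of_not_isUnit hq),
    ← padicValInt_eq_emultiplicity (add_one_ne_zero_of_not_isUnit hq),
    ← padicValInt_eq_emultiplicity (pow_sub_one_ne_zero_of_not_isUnit hq hi₀),
    Int.natCast_emultiplicity, ← padicValNat_eq_emultiplicity hi₀] at h_lte
  exact_mod_cast h_lte

end PowSubOne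

/-- The closed form `E(n)` of `v₂(ψₙ(q)) - v₂(n!)` for odd `q ≠ ±1`. The truncated subtraction is
exact there, since `q + 1` is even and nonzero. -/
def psiExcess (q : ℤ) (n : ℕ) : ℕ :=
  n * padicValInt 2 (q - 1) + n / 2 * (padicValInt 2 (q + 1) - 1)

theorem psiExcess_add_psiExcess_le (q : ℤ) (m n : ℕ) :
    psiExcess q m + psiExcess q n ≤ psiExcess q (m + n) := by
  have h_half : m / 2 + n / 2 ≤ (m + n) / 2 := by omega
  calc psiExcess q m + psiExcess q n
      = (m + n) * padicValInt 2 (q - 1) + (m / 2 + n / 2) * (padicValInt 2 (q + 1) - 1) := by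
        unfold psiExcess; ring
    _ ≤ psiExcess q (m + n) := by unfold psiExcess; gcongr

theorem psiExcess_mono (q : ℤ) : Monotone (psiExcess q) :=
  fun m n h => by unfold psiExcess; gcongr

theorem sum_psiExcess_le {ι : Type*} (q : ℤ) (s : Finset ι) (m : ι → ℕ) :
    ∑ i ∈ s, psiExcess q (m i) ≤ psiExcess q (∑ i ∈ s, m i) :=
  Finset.le_sum_of_subadditive (N := ℕᵒᵈ) (psiExcess q) (Nat.zero_le _)
    (psiExcess_add_psiExcess_le q) s m

section OddBase

variable {q : ℤ}

theorem le_psiExcess (hq : q ≠ 1) (hodd : Odd q) (n : ℕ) : n ≤ psiExcess q n :=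
  calc n ≤ n * padicValInt 2 (q - 1) := Nat.le_mul_of_pos_right n
        (one_le_padicValInt_of_dvd (sub_ne_zero.mpr hq) (hodd.sub_odd odd_one).two_dvd)
    _ ≤ psiExcess q n := Nat.le_add_right _ _

theorem padicValInt_two_pow_succ_sub_one (hq : ¬IsUnit q) (hodd : Odd q) (i : ℕ) :
    padicValInt 2 (q ^ (i + 1) - 1) + psiExcess q i =
      padicValNat 2 (i + 1) + psiExcess q (i + 1) := by
  obtain heven | hi := Nat.even_or_odd (i + 1)
  · have h_half : (i + 1) / 2 = i / 2 + 1 := by grind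
    have h_val := padicValInt_two_pow_sub_one_of_even hq hodd heven i.succ_ne_zero
    have h_pos : 1 ≤ padicValInt 2 (q + 1) :=
      one_le_padicValInt_of_dvd (add_one_ne_zero_of_not_isUnit hq) hodd.add_one.two_dvd
    simp only [psiExcess, h_half, add_mul, one_mul]
    omega
  · have h_half : (i + 1) / 2 = i / 2 := by grind
    rw [padicValInt_two_pow_sub_one_of_odd hq hodd hi,
      padicValNat.eq_zero_of_not_dvd hi.not_two_dvd_nat, psiExcess, psiExcess, h_half]
    ring

theorem padicValInt_two_pow_mul_succ_sub_one_le (hq : ¬IsUnit q) (hodd : Odd q) {d : ℕ}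
    (hd : d ≠ 0) (i : ℕ) :
    padicValInt 2 (q ^ (d * (i + 1)) - 1) + psiExcess q (d * i) ≤
      padicValNat 2 (i + 1) + psiExcess q (d * (i + 1)) := by
  have h_index : d * (i + 1) = d * i + (d - 1) + 1 := by grind
  have h_val := padicValInt_two_pow_succ_sub_one hq hodd (d * i + (d - 1))
  rw [← h_index, padicValNat.mul hd (Nat.add_one_ne_zero i)] at h_val
  have h_d : padicValNat 2 d ≤ psiExcess q (d - 1) :=
    (Nat.le_sub_one_of_lt (Nat.padicValNat_lt_self hd)).trans
      (le_psiExcess (sub_ne_zero.mp (sub_one_ne_zero_of_not_isUnit hq)) hodd _)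
  have h_add := psiExcess_add_psiExcess_le q (d * i) (d - 1)
  omega

end OddBase

section PsiPoly

theorem psiPoly_succ (m : ℕ) (x : ℚ) : psiPoly (m + 1) x = psiPoly m x * (x ^ (m + 1) - 1) :=
  Finset.prod_Icc_succ_top (by omega) _

variable {q : ℤ}

theorem psiPoly_intCast_ne_zero (hq : ¬IsUnit q) (m : ℕ) : psiPoly m (q : ℚ) ≠ 0 :=
  Finset.prod_ne_zero_iff.mpr fun i hi => by
    have hi₀ : i ≠ 0 := Nat.one_le_iff_ne_zero.mp (Finset.mem_Icc.mp hi).1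
    exact_mod_cast pow_sub_one_ne_zero_of_not_isUnit hq hi₀

theorem padicValRat_psiPoly_succ (p : ℕ) [Fact p.Prime] (hq : ¬IsUnit q) (m : ℕ) :
    padicValRat p (psiPoly (m + 1) q) =
      padicValRat p (psiPoly m q) + padicValInt p (q ^ (m + 1) - 1) := by
  have h_ne : (q : ℚ) ^ (m + 1) - 1 ≠ 0 := by
    exact_mod_cast pow_sub_one_ne_zero_of_not_isUnit hq m.succ_ne_zero
  rw [psiPoly_succ, padicValRat.mul (psiPoly_intCast_ne_zero hq m) h_ne, ← padicValRat.of_int]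
  push_cast
  rfl

theorem padicValRat_two_psiPoly (hq : ¬IsUnit q) (hodd : Odd q) (n : ℕ) :
    padicValRat 2 (psiPoly n q) = padicValNat 2 n.factorial + psiExcess q n := by
  induction n with
  | zero => simp [psiPoly, psiExcess]
  | succ n ih =>
    have h_val := padicValInt_two_pow_succ_sub_one hq hodd n
    rw [padicValRat_psiPoly_succ 2 hq, ih, padicValNat_factorial_succ]
    omega

theorem padicValRat_two_psiPoly_pow_le (hq : ¬IsUnit q) (hodd : Odd q) {d : ℕ} (hd : d ≠ 0)
    (m : ℕ) :
    padicValRat 2 (psiPoly m ((q : ℚ) ^ d)) ≤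
      padicValNat 2 m.factorial + psiExcess q (d * m) := by
  rw [← Int.cast_pow]
  induction m with
  | zero => simp [psiPoly]
  | succ m ih =>
    have h_val := padicValInt_two_pow_mul_succ_sub_one_le hq hodd hd m
    rw [padicValRat_psiPoly_succ 2 (by rwa [isUnit_pow_iff hd]), ← pow_mul,
      padicValNat_factorial_succ]
    omega

end PsiPoly

theorem aMu_eq_psiPoly_div (q : ℕ) {F : Type*} [Field F] (n : ℕ)
    (μ : Polynomial F →₀ Multiset ℕ) :
    aMu q n μ =
      psiPoly n q / ∏ f ∈ μ.support, psiPoly (μ f).sum ((q : ℚ) ^ f.natDegree) := by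
  simp only [aMu, psiPoly, pow_mul]

theorem two_adic_valuation_of_aMu_general {ι : Type*} {q : ℤ} (hq : ¬IsUnit q) (hodd : Odd q)
    {n : ℕ} {s : Finset ι} {m d : ι → ℕ} (hd : ∀ i ∈ s, d i ≠ 0)
    (hsum : ∑ i ∈ s, m i * d i ≤ n) :
    padicValRat 2 ((n.factorial : ℚ) / ∏ i ∈ s, ((m i).factorial : ℚ)) ≤
      padicValRat 2 (psiPoly n q / ∏ i ∈ s, psiPoly (m i) ((q : ℚ) ^ d i)) := by
  have h_factorial (k : ℕ) : (k.factorial : ℚ) ≠ 0 := by exact_mod_cast k.factorial_ne_zero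
  have h_psi : ∀ i ∈ s, psiPoly (m i) ((q : ℚ) ^ d i) ≠ 0 := fun i hi => by
    rw [← Int.cast_pow]
    exact psiPoly_intCast_ne_zero (by rwa [isUnit_pow_iff (hd i hi)]) _
  have h_excess : ∑ i ∈ s, psiExcess q (d i * m i) ≤ psiExcess q n :=
    (sum_psiExcess_le q s _).trans (psiExcess_mono q (by simpa only [mul_comm] using hsum))
  have h_denominator : ∑ i ∈ s, padicValRat 2 (psiPoly (m i) ((q : ℚ) ^ d i)) ≤
      ∑ i ∈ s, (padicValNat 2 (m i).factorial : ℤ) + psiExcess q n :=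
    calc _ ≤ ∑ i ∈ s, ((padicValNat 2 (m i).factorial : ℤ) + psiExcess q (d i * m i)) :=
          Finset.sum_le_sum fun i hi => padicValRat_two_psiPoly_pow_le hq hodd (hd i hi) (m i)
      _ ≤ _ := by
        rw [Finset.sum_add_distrib]
        gcongr
        exact_mod_cast h_excess
  rw [padicValRat.div (h_factorial n) (Finset.prod_ne_zero_iff.mpr fun i _ => h_factorial (m i)),
    padicValRat.div (psiPoly_intCast_ne_zero hq n) (Finset.prod_ne_zero_iff.mpr h_psi),
    padicValRat_prod fun i _ => h_factorial (m i), padicValRat_prod h_psi,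
    padicValRat_two_psiPoly hq hodd]
  simp only [padicValRat.of_nat]
  linarith

theorem two_adic_valuation_of_aMu
    (q : ℕ) (hq : IsPrimePow q) (hodd : Odd q)
    (F : Type*) [Field F] [Fintype F] (hFq : Fintype.card F = q)
    (n : ℕ) (hn : 0 < n) (μ : Polynomial F →₀ Multiset ℕ) (hμ : IsXn F n μ) :
    padicValRat 2
        ((Nat.factorial n : ℚ) / ∏ f ∈ μ.support, (Nat.factorial (μ f).sum : ℚ)) ≤
      padicValRat 2 (aMu q n μ) := by
  rw [aMu_eq_psiPoly_div]
  exact_mod_cast two_adic_valuation_of_aMu_general (Int.ofNat_isUnit.not.mpr hq.not_isUnit)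
    hodd.natCast (fun f hf => (hμ.1 f hf).2.1.natDegree_pos.ne') hμ.2.2.le
end
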